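/- Let m ≥ 2, 1 ≤ k ≤ m−1, and x ∈ ℤΔ([m],[n]). (Note that (x∂_{k+1})∂_{k−1} = (x∂_{k−1})∂_k by the simplicial identities, so (x∂_{k+1}) ▽_k (x∂_{k−1}) is defined.) Then x = (x∂_{k+1}) ▽_k (x∂_{k−1}) holds if and only if every operator α ∈ supp(x) is degenerate at k−1 or at k, i.e. satisfies α(k−1) = α(k) or α(k) = α(k+1). -/

import Mathlib

/-!
Every operator `act · β` is a pushforward of finitely supported functions, so the filler of
`x ∂(k+1)` and `x ∂(k-1)` is `x a - x b + x c`, where `a`, `b`, `c` are the endomorphisms of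
`Fin (m+3)` that fix all points except: `a` sends `k+1` to `k`, `c` sends `k-1` to `k`, and `b`
does both (`endo_right`, `endo_both`, `endo_left`).

All three maps identify `k` with one of its neighbours, so each term is supported on operators
degenerate at `k-1` or at `k`. Conversely the filler is linear in `x`, so it suffices to treat one
operator `α`: if `α (k-1) = α k` then `α c = α` and `α a = α b`, and if `α k = α (k+1)` then
`α a = α` and `α c = α b`. Either way `α a - α b + α c = α`.
-/

abbrev ZD (a b : ℕ) := (Fin a →o Fin b) →₀ ℤ

noncomputable def act {a b c : ℕ} (x : ZD b c) (β : Fin a →o Fin b) : ZD a c :=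
  Finsupp.mapDomain (fun α => α.comp β) x

def face {m : ℕ} (i : Fin (m+1)) : Fin m →o Fin (m+1) :=
  ⟨i.succAbove, (Fin.succAboveOrderEmb i).monotone⟩

def degen {m : ℕ} (i : Fin m) : Fin (m+1) →o Fin m :=
  ⟨i.predAbove, Fin.predAbove_right_monotone i⟩

def memO {a b : ℕ} (x : ZD a b) : Prop :=
  (x.sum fun _ c => c) = 1 ∧
    ∀ (p : ℕ) (β : Fin (p+1) →o Fin a) (γ : Fin (p+1) →o Fin b),
      Function.Injective ⇑β → Function.Injective ⇑γ → 0 ≤ act x β γ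

/-- The witness operation `x ▽ₖ y`, for `x, y ∈ ℤΔ([m],[n])` and `1 ≤ k ≤ m`. -/
noncomputable def fill {m b : ℕ} (k : ℕ) (h1 : 1 ≤ k) (h2 : k ≤ m)
    (x y : ZD (m+1) b) : ZD (m+2) b :=
  act x (degen ⟨k, by omega⟩)
    - act (act (act x (face ⟨k-1, by omega⟩)) (degen ⟨k-1, by omega⟩)) (degen ⟨k-1, by omega⟩)
    + act y (degen ⟨k-1, by omega⟩)

/-- The pasting operation `x ⋆ₖ y`. -/
noncomputable def paste {m b : ℕ} (k : ℕ) (h1 : 1 ≤ k) (h2 : k ≤ m)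
    (x y : ZD (m+1) b) : ZD (m+1) b :=
  x - act (act x (face ⟨k-1, by omega⟩)) (degen ⟨k-1, by omega⟩) + y

/-- `x` is degenerate at `k`, i.e. `x = y σₖ` for some `y` one dimension lower. -/
def isDegenAt {a b : ℕ} (x : ZD a b) (k : ℕ) : Prop :=
  ∃ (p : ℕ) (hp : a = p + 1) (hk : k < p) (y : ZD p b),
    x = hp ▸ act y (degen ⟨k, hk⟩)

def isDegen {a b : ℕ} (x : ZD a b) : Prop := ∃ k, isDegenAt x k

/-- The number of preimages of the top element `n` under `α`. -/
def npre {a n : ℕ} (α : Fin a →o Fin (n+1)) : ℕ :=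
  (Finset.univ.filter fun i => α i = Fin.last n).card

/-- `x` lies in the simplicial subset `A`: all operators in the support of `x`
have equally many preimages of the top element. -/
def inA {a n : ℕ} (x : ZD a (n+1)) : Prop :=
  ∀ α ∈ x.support, ∀ β ∈ x.support, npre α = npre β

/-- `r` is the rank of `x`: the least `i` such that some `α ∈ supp x` has `α i = n`. -/
def isRank {a n : ℕ} (x : ZD a (n+1)) (r : Fin a) : Prop :=
  IsLeast {i : Fin a | ∃ α ∈ x.support, α i = Fin.last n} r

/-- `x̌`: the part of `x` supported on operators with `α r < n`. -/
noncomputable def checkPart {a n : ℕ} (x : ZD a (n+1)) (r : Fin a) : ZD a (n+1) :=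
  x.filter (fun α => ¬ (α r = Fin.last n))

/-- `x̄`: the part of `x` supported on operators with `α r = n`. -/
noncomputable def barPart {a n : ℕ} (x : ZD a (n+1)) (r : Fin a) : ZD a (n+1) :=
  x.filter (fun α => α r = Fin.last n)

/-- `ℓ` is the level of `x` (with rank `r`). -/
def isLevel {a n : ℕ} (x : ZD a (n+1)) (r ℓ : Fin a) : Prop :=
  IsLeast {i : Fin a | ∀ α ∈ (checkPart x r).support, α i = α r} ℓ

/-- Condition (†): `x̄` is degenerate at `ℓ - 1`. -/
def dagger {a n : ℕ} (x : ZD a (n+1)) (r ℓ : Fin a) : Prop :=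
  isDegenAt (barPart x r) ((ℓ : ℕ) - 1)

/-- The corank of `x`: the greatest number of preimages of `n` among operators in `supp x`. -/
def corank {a n : ℕ} (x : ZD a (n+1)) : ℕ := x.support.sup npre

/-- `u = x̌ + (x̄ ∂ℓ) σ(ℓ-1)`. -/
noncomputable def uPart {m n : ℕ} (x : ZD (m+1) (n+1)) (r ℓ : Fin (m+1))
    (h1 : 1 ≤ (ℓ : ℕ)) : ZD (m+1) (n+1) :=
  checkPart x r
    + act (act (barPart x r) (face ℓ)) (degen ⟨(ℓ:ℕ)-1, by have := ℓ.isLt; omega⟩)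

/-- `v = (x̌ ∂(ℓ-1)) σ(ℓ-1) + x̄`. -/
noncomputable def vPart {m n : ℕ} (x : ZD (m+1) (n+1)) (r ℓ : Fin (m+1))
    (h1 : 1 ≤ (ℓ : ℕ)) : ZD (m+1) (n+1) :=
  act (act (checkPart x r) (face ⟨(ℓ:ℕ)-1, by have := ℓ.isLt; omega⟩))
      (degen ⟨(ℓ:ℕ)-1, by have := ℓ.isLt; omega⟩)
    + barPart x r

/-- The parent `w = x̌ σℓ + x̄ σ(ℓ-1)`. -/
noncomputable def parent {m n : ℕ} (x : ZD (m+1) (n+1)) (r ℓ : Fin (m+1)) :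
    ZD (m+2) (n+1) :=
  act (checkPart x r) (degen ℓ)
    + act (barPart x r) (degen ⟨(ℓ:ℕ)-1, by have := ℓ.isLt; omega⟩)

/-- Bilinear extension of composition: `(x ∘ y)_γ = Σ_{α∘β = γ} x_α · y_β`. -/
noncomputable def zcomp {p m n : ℕ} (x : ZD m n) (y : ZD p m) : ZD p n :=
  x.sum fun α c => c • Finsupp.mapDomain (fun β => α.comp β) y

lemma act_act {a b c d : ℕ} (x : ZD c d) (β : Fin b →o Fin c) (γ : Fin a →o Fin b) :
    act (act x β) γ = act x (β.comp γ) := by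
  unfold act
  rw [← Finsupp.mapDomain_comp]
  rfl

lemma face_val {m : ℕ} (i : Fin (m+1)) (j : Fin m) :
    (face i j : ℕ) = if (j : ℕ) < i then (j : ℕ) else j + 1 := by
  change ((i.succAbove j : Fin (m+1)) : ℕ) = _
  simp only [Fin.succAbove, Fin.lt_def, Fin.val_castSucc]
  split_ifs <;> simp

lemma degen_val {m : ℕ} (i : Fin m) (j : Fin (m+1)) :
    (degen i j : ℕ) = if (j : ℕ) ≤ i then (j : ℕ) else j - 1 := by
  change ((i.predAbove j : Fin m) : ℕ) = _
  simp only [Fin.predAbove, Fin.lt_def, Fin.val_castSucc]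
  split_ifs <;> simp <;> omega

lemma endo_right {m k : ℕ} (h2 : k ≤ m+1) (i : Fin (m+3)) :
    (((face (m := m+2) ⟨k+1, by omega⟩).comp (degen ⟨k, by omega⟩)) i : ℕ)
      = if (i : ℕ) = k + 1 then k else i := by
  simp only [OrderHom.comp_coe, Function.comp_apply, face_val, degen_val]
  split_ifs <;> omega

lemma endo_left {m k : ℕ} (h1 : 1 ≤ k) (h2 : k ≤ m+1) (i : Fin (m+3)) :
    (((face (m := m+2) ⟨k-1, by omega⟩).comp (degen ⟨k-1, by omega⟩)) i : ℕ)
      = if (i : ℕ) = k - 1 then k else i := by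
  simp only [OrderHom.comp_coe, Function.comp_apply, face_val, degen_val]
  split_ifs <;> omega

lemma endo_both {m k : ℕ} (h1 : 1 ≤ k) (h2 : k ≤ m+1) (i : Fin (m+3)) :
    (((((face (m := m+2) ⟨k+1, by omega⟩).comp (face (m := m+1) ⟨k-1, by omega⟩)).comp
      (degen ⟨k-1, by omega⟩)).comp (degen ⟨k-1, by omega⟩)) i : ℕ)
      = if (i : ℕ) = k - 1 ∨ (i : ℕ) = k + 1 then k else i := by
  simp only [OrderHom.comp_coe, Function.comp_apply, face_val, degen_val]
  split_ifs <;> omega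

/-- If `β` identifies `i` and `j`, then `x β` has no coefficient at operators separating them. -/
lemma act_apply_eq_zero {a b c : ℕ} (x : ZD b c) (β : Fin a →o Fin b) (α : Fin a →o Fin c)
    (i j : Fin a) (hβ : β i = β j) (hα : α i ≠ α j) : act x β α = 0 := by
  apply Finsupp.mapDomain_of_notMem_range
  rintro ⟨γ, rfl⟩
  exact hα (by simp [hβ])

/-- `x = (x ∂(k+1)) ▽ₖ (x ∂(k-1))` iff every operator in `supp x` is degenerate
at `k-1` or at `k`. (Here the paper's `m ≥ 2` is `m+3` points, `1 ≤ k ≤ m+1`.) -/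
theorem stmt7 (m n : ℕ) (x : ZD (m+3) (n+1)) (k : ℕ) (h1 : 1 ≤ k) (h2 : k ≤ m+1) :
    x = fill k h1 h2 (act x (face ⟨k+1, by omega⟩)) (act x (face ⟨k-1, by omega⟩)) ↔
      ∀ α ∈ x.support,
        α ⟨k-1, by omega⟩ = α ⟨k, by omega⟩ ∨ α ⟨k, by omega⟩ = α ⟨k+1, by omega⟩ := by
  have ha := endo_right (m := m) h2
  have hb := endo_both (m := m) h1 h2
  have hc := endo_left (m := m) h1 h2
  unfold fill
  simp only [act_act]
  generalize (face (m := m+2) ⟨k+1, by omega⟩).comp (degen ⟨k, by omega⟩) = a at *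
  generalize (((face (m := m+2) ⟨k+1, by omega⟩).comp (face (m := m+1) ⟨k-1, by omega⟩)).comp
      (degen ⟨k-1, by omega⟩)).comp (degen ⟨k-1, by omega⟩) = b at *
  generalize (face (m := m+2) ⟨k-1, by omega⟩).comp (degen ⟨k-1, by omega⟩) = c at *
  constructor
  · intro h α hα
    by_contra! hne
    obtain ⟨hl, hr⟩ := hne
    have e := DFunLike.congr_fun h α
    rw [Finsupp.add_apply, Finsupp.sub_apply,
      act_apply_eq_zero x a α _ _ (by ext; simp [ha]) hr,
      act_apply_eq_zero x b α _ _ (by ext; simp [hb]) hr,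
      act_apply_eq_zero x c α _ _ (by ext; simp [hc]) hl] at e
    exact Finsupp.mem_support_iff.mp hα (by simpa using e)
  · intro h
    conv_lhs => rw [← Finsupp.sum_single x]
    unfold act Finsupp.mapDomain
    rw [← Finsupp.sum_sub, ← Finsupp.sum_add]
    refine Finset.sum_congr rfl fun α hα => ?_
    beta_reduce
    -- Composites with `α` agree as soon as `α` identifies the values of the inner maps.
    have key : ∀ (p q : Fin (m+3) →o Fin (m+3)), (∀ i, α (p i) = α (q i)) →
        α.comp p = α.comp q := fun p q hpq => by
      ext i
      simp [hpq i]
    rcases h α hα with hl | hr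
    · have e1 : α.comp a = α.comp b := key _ _ fun i => by
        by_cases hi : (i : ℕ) = k - 1
        · have : a i = ⟨k-1, by omega⟩ := by ext; rw [ha]; split_ifs <;> simp <;> omega
          have : b i = ⟨k, by omega⟩ := by ext; rw [hb]; simp [hi]
          simp_all
        · congr 1; ext; rw [ha, hb]; simp [hi]
      have e2 : α.comp c = α.comp OrderHom.id := key _ _ fun i => by
        by_cases hi : (i : ℕ) = k - 1
        · have : i = ⟨k-1, by omega⟩ := by ext; exact hi
          have : c i = ⟨k, by omega⟩ := by ext; rw [hc]; simp [hi]
          simp_all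
        · congr 1; ext; rw [hc]; simp [hi]
      rw [e1, e2, sub_self, zero_add, OrderHom.comp_id]
    · have e1 : α.comp c = α.comp b := key _ _ fun i => by
        by_cases hi : (i : ℕ) = k + 1
        · have : c i = ⟨k+1, by omega⟩ := by ext; rw [hc]; split_ifs <;> simp <;> omega
          have : b i = ⟨k, by omega⟩ := by ext; rw [hb]; simp [hi]
          simp_all
        · congr 1; ext; rw [hc, hb]; simp [hi]
      have e2 : α.comp a = α.comp OrderHom.id := key _ _ fun i => by
        by_cases hi : (i : ℕ) = k + 1
        · have : i = ⟨k+1, by omega⟩ := by ext; exact hi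
          have : a i = ⟨k, by omega⟩ := by ext; rw [ha]; simp [hi]
          simp_all
        · congr 1; ext; rw [ha]; simp [hi]
      rw [e1, e2, sub_add_cancel, OrderHom.comp_id]
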